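/- Let σ be a real-valued Borel measure on 𝕋 with σ(𝕋) = 0 satisfying σ(I) ≤ h(|I|) for every arc I, where h is a gauge function. Then there exists a constant C = C(h) > 0 such that the Poisson integral satisfies ∫_𝕋 (1-|z|²)/|ζ-z|² dσ(ζ) ≤ C·h(1-|z|)/(1-|z|) for all z in the unit disk 𝔻. -/

import Mathlib

open MeasureTheory Set Filter
open scoped ENNReal

noncomputable section

/-- The unit circle, modelled as `ℝ/ℤ` with normalized Haar (Lebesgue) measure `m(𝕋)=1`. -/
abbrev Circ := AddCircle (1 : ℝ)

/-- An open arc of the circle. -/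
def IsOpenArc (I : Set Circ) : Prop :=
  ∃ a b : ℝ, I = (fun x : ℝ => (x : Circ)) '' Set.Ioo a b

/-- An arc of the circle (up to endpoints, modelled as a half-open arc). -/
def IsArc (I : Set Circ) : Prop :=
  ∃ a b : ℝ, I = (fun x : ℝ => (x : Circ)) '' Set.Ioc a b

/-- A gauge function: nonnegative, increasing and continuous on `(0,1]`, tending to `0`
at `0⁺`, with `h(x)/x` decreasing and tending to `∞` at `0⁺`. -/
def GaugeFun (h : ℝ → ℝ) : Prop :=
  (∀ x ∈ Set.Ioc (0:ℝ) 1, 0 ≤ h x) ∧ MonotoneOn h (Set.Ioc 0 1) ∧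
  ContinuousOn h (Set.Ioc 0 1) ∧
  Tendsto h (nhdsWithin 0 (Set.Ioi 0)) (nhds 0) ∧
  AntitoneOn (fun x => h x / x) (Set.Ioc 0 1) ∧
  Tendsto (fun x => h x / x) (nhdsWithin 0 (Set.Ioi 0)) atTop

/-- Membership in the family `F(h,R)`: integrable `f` with `0 ≤ f ≤ R` pointwise whose
mass on every arc `I` is at most `h(|I|)`. -/
def MemF (h : ℝ → ℝ) (R : Circ → ℝ≥0∞) (f : Circ → ℝ) : Prop :=
  Integrable f ∧ (∀ z, 0 ≤ f z) ∧ (∀ z, ENNReal.ofReal (f z) ≤ R z) ∧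
  ∀ I : Set Circ, IsArc I → (∫ z in I, f z) ≤ h (volume I).toReal

/-- The Hausdorff functional `M(h,R)`: infimum over families `U` of open arcs of
`Σ_{ℓ∈U} h(|ℓ|) + ∫_{𝕋 \ ∪ℓ} R dm`. -/
def Mfunc (h : ℝ → ℝ) (R : Circ → ℝ≥0∞) : ℝ≥0∞ :=
  ⨅ (U : Set (Set Circ)) (_ : ∀ ℓ ∈ U, IsOpenArc ℓ),
    (∑' ℓ : U, ENNReal.ofReal (h (volume (ℓ : Set Circ)).toReal)) +
      ∫⁻ z in (⋃ ℓ ∈ U, ℓ)ᶜ, R z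

/-- The embedding `𝕋 = ℝ/ℤ → ℂ`, `t ↦ e^{2πit}`. -/
def circEmb (ζ : Circ) : ℂ := (AddCircle.toCircle ζ : ℂ)

/-!
For `z = r e^{2πiθ}` and `d = 1 - r`, the monotonicity of `h` and of `h(x)/x` gives
`h x ≤ (h d / d) x + h d` for all `x ∈ (0, 1]`. Hence on every arc containing `θ` the measure `μ` is
at most `ν` plus the majorant `(h d / d) m + h d δ_θ`. The Poisson kernel `P_z` decreases with the
distance to `θ`, so its superlevel sets are balls centred at `θ`, and the layer-cake formula turns
the comparison on arcs into one of Poisson integrals. The majorant contributes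
`h d / d + h d · P_z(θ) ≤ 3 h d / d`, because `P_z` has mean one and maximum at most `2 / d`.
-/

open Metric
open scoped Real

section RadialComparison

lemma integral_le_integral_of_measure_superlevel_le {X : Type*} [MeasurableSpace X]
    {μ ν : Measure X} {f : X → ℝ} (hf_nonneg : 0 ≤ f) (hf_meas : Measurable f)
    (hf_int : Integrable f ν) (hlevel : ∀ t > 0, μ {x | t < f x} ≤ ν {x | t < f x}) :
    ∫ x, f x ∂μ ≤ ∫ x, f x ∂ν := by
  have hlintegral : ∫⁻ x, ENNReal.ofReal (f x) ∂μ ≤ ∫⁻ x, ENNReal.ofReal (f x) ∂ν := by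
    rw [lintegral_eq_lintegral_meas_lt μ (.of_forall hf_nonneg) hf_meas.aemeasurable,
      lintegral_eq_lintegral_meas_lt ν (.of_forall hf_nonneg) hf_meas.aemeasurable]
    exact setLIntegral_mono' measurableSet_Ioi hlevel
  rw [integral_eq_lintegral_of_nonneg_ae (.of_forall hf_nonneg) hf_meas.aestronglyMeasurable,
    integral_eq_lintegral_of_nonneg_ae (.of_forall hf_nonneg) hf_meas.aestronglyMeasurable]
  exact ENNReal.toReal_mono hf_int.lintegral_lt_top.ne hlintegral

lemma measure_image_Ioo_le_of_forall_Ioc {X : Type*} [MeasurableSpace X] {μ ν : Measure X}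
    {f : ℝ → X} {a b x : ℝ} (hxb : x < b)
    (hle : ∀ b' ∈ Ioo x b, μ (f '' Ioc a b') ≤ ν (f '' Ioc a b')) :
    μ (f '' Ioo a b) ≤ ν (f '' Ioo a b) := by
  obtain ⟨u, hu_mono, hu_mem, hu_lim⟩ := exists_seq_strictMono_tendsto' hxb
  have hIoo : Ioo a b = ⋃ n, Ioc a (u n) := by
    simp_rw [← Ioi_inter_Iio, ← Ioi_inter_Iic, ← inter_iUnion,
      iUnion_Iic_eq_Iio_of_lt_of_tendsto (fun n ↦ (hu_mem n).2) hu_lim]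
  have himage_mono : Monotone fun n ↦ f '' Ioc a (u n) := fun m n hmn ↦
    image_mono (Ioc_subset_Ioc_right (hu_mono.monotone hmn))
  rw [hIoo, image_iUnion, himage_mono.measure_iUnion, himage_mono.measure_iUnion]
  exact iSup_mono fun n ↦ hle _ (hu_mem n)

variable {X : Type*} [PseudoMetricSpace X] [CompactSpace X] {c : X}

lemma exists_eq_ball_of_isOpen_of_radial {S : Set X} (hS : IsOpen S)
    (hradial : ∀ x ∈ S, ∀ y, dist y c ≤ dist x c → y ∈ S) : ∃ ε, S = ball c ε := by
  rcases Sᶜ.eq_empty_or_nonempty with hcompl | hcompl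
  · obtain ⟨ε, hε⟩ := (isBounded_of_compactSpace (s := S)).subset_ball c
    exact ⟨ε, hε.antisymm (compl_empty_iff.1 hcompl ▸ subset_univ _)⟩
  · obtain ⟨y, hyS, hy⟩ := hS.isClosed_compl.exists_infDist_eq_dist hcompl c
    refine ⟨dist y c, Set.ext fun x ↦ ⟨fun hx ↦ ?_, fun hx ↦ ?_⟩⟩
    · exact lt_of_not_ge fun hle ↦ hyS (hradial x hx y hle)
    · by_contra hxS
      have hle : dist y c ≤ dist x c := by
        rw [dist_comm y, dist_comm x, ← hy]
        exact infDist_le_dist_of_mem hxS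
      exact hle.not_gt hx

lemma integral_le_integral_of_measure_ball_le [MeasurableSpace X] [BorelSpace X]
    {μ ν : Measure X} [IsFiniteMeasure ν] {f : X → ℝ} (hf_nonneg : 0 ≤ f) (hf_cont : Continuous f)
    (hf_radial : ∀ x y, dist x c ≤ dist y c → f y ≤ f x)
    (hball : ∀ ε > 0, μ (ball c ε) ≤ ν (ball c ε)) :
    ∫ x, f x ∂μ ≤ ∫ x, f x ∂ν := by
  have hf_int : Integrable f ν :=
    hf_cont.integrable_of_hasCompactSupport (.of_compactSpace f)
  refine integral_le_integral_of_measure_superlevel_le hf_nonneg hf_cont.measurable hf_int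
    fun t _ ↦ ?_
  obtain ⟨ε, hε⟩ := exists_eq_ball_of_isOpen_of_radial (c := c)
    (isOpen_lt continuous_const hf_cont) fun x hx y hyx ↦ lt_of_lt_of_le hx (hf_radial y x hyx)
  rw [hε]
  rcases le_or_gt ε 0 with hε_nonpos | hε_pos
  · simp [ball_eq_empty.2 hε_nonpos]
  · exact hball ε hε_pos

end RadialComparison

section Circle

lemma coe_image_Ioo_eq_ball (p x ε : ℝ) :
    (fun y : ℝ ↦ (y : AddCircle p)) '' Ioo (x - ε) (x + ε) = ball (x : AddCircle p) ε := by
  ext ζ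
  rw [mem_ball_iff_norm, QuotientAddGroup.norm_lt_iff]
  constructor
  · rintro ⟨y, hy, rfl⟩
    exact ⟨y - x, rfl, by rwa [← mem_ball_iff_norm, Real.ball_eq_Ioo]⟩
  · rintro ⟨u, hu, hu_norm⟩
    refine ⟨x + u, ?_, ?_⟩
    · rw [← Real.ball_eq_Ioo, mem_ball_iff_norm, add_sub_cancel_left]
      exact hu_norm
    · change ((x + u : ℝ) : AddCircle p) = ζ
      rw [AddCircle.coe_add]
      exact (congrArg _ hu).trans (add_sub_cancel _ _)

lemma volume_real_coe_image_Ioc_mem {a b : ℝ} (hab : a < b) :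
    volume.real ((fun x : ℝ ↦ (x : Circ)) '' Ioc a b) ∈ Ioc (0 : ℝ) 1 := by
  have hopen : IsOpen ((fun x : ℝ ↦ (x : Circ)) '' Ioo a b) :=
    QuotientAddGroup.isOpenMap_coe _ isOpen_Ioo
  have hpos : 0 < volume ((fun x : ℝ ↦ (x : Circ)) '' Ioc a b) :=
    (hopen.measure_pos volume ((nonempty_Ioo.2 hab).image _)).trans_le
      (measure_mono (image_mono Ioo_subset_Ioc_self))
  refine ⟨ENNReal.toReal_pos hpos.ne' (measure_ne_top _ _), ?_⟩
  simpa [measureReal_def] using measureReal_mono (μ := (volume : Measure Circ))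
    (subset_univ ((fun x : ℝ ↦ (x : Circ)) '' Ioc a b))

lemma cos_two_pi_div_mul_norm {T : ℝ} (ζ : AddCircle T) :
    Real.cos (2 * π / T * ‖ζ‖) = (AddCircle.toCircle ζ : ℂ).re := by
  rcases eq_or_ne T 0 with rfl | hT
  · induction ζ using QuotientAddGroup.induction_on
    simp [AddCircle.toCircle_apply_mk]
  induction ζ using QuotientAddGroup.induction_on with | H x
  have hshift : 2 * π / T * (x - round (T⁻¹ * x) * T) =
      2 * π / T * x - round (T⁻¹ * x) * (2 * π) := by
    field_simp
  rw [AddCircle.toCircle_apply_mk, Circle.coe_exp, Complex.exp_ofReal_mul_I_re, AddCircle.norm_eq,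
    ← Real.cos_abs, abs_mul, abs_abs, ← abs_mul, Real.cos_abs, hshift,
    Real.cos_sub_int_mul_two_pi]

lemma continuous_circEmb : Continuous circEmb :=
  continuous_subtype_val.comp AddCircle.continuous_toCircle

lemma norm_circEmb (ζ : Circ) : ‖circEmb ζ‖ = 1 :=
  Circle.norm_coe _

lemma exists_eq_norm_mul_circEmb (z : ℂ) : ∃ θ : ℝ, z = ‖z‖ * circEmb θ := by
  refine ⟨z.arg / (2 * π), ?_⟩
  have harg : 2 * π / 1 * (z.arg / (2 * π)) = z.arg := by field_simp
  rw [circEmb, AddCircle.toCircle_apply_mk, harg, Circle.coe_exp, Complex.norm_mul_exp_arg_mul_I]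

lemma norm_circEmb_sub_mul_circEmb_sq (r : ℝ) (ζ θ : Circ) :
    ‖circEmb ζ - r * circEmb θ‖ ^ 2 = 1 + r ^ 2 - 2 * r * Real.cos (2 * π * dist ζ θ) := by
  have hcos : Real.cos (2 * π * dist ζ θ) = (circEmb ζ * starRingEnd ℂ (circEmb θ)).re := by
    have hnorm := cos_two_pi_div_mul_norm (ζ - θ)
    rwa [div_one, ← dist_eq_norm, sub_eq_add_neg, AddCircle.toCircle_add, AddCircle.toCircle_neg,
      Circle.coe_mul, Circle.coe_inv_eq_conj] at hnorm
  rw [← Complex.normSq_eq_norm_sq, Complex.normSq_sub, Complex.normSq_eq_norm_sq,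
    Complex.normSq_eq_norm_sq, norm_mul, norm_circEmb, norm_circEmb, Complex.norm_real,
    Real.norm_eq_abs, map_mul, Complex.conj_ofReal, mul_left_comm, Complex.re_ofReal_mul, ← hcos,
    mul_one, sq_abs]
  ring

lemma integral_comp_circEmb {E : Type*} [NormedAddCommGroup E] [NormedSpace ℝ E] (f : ℂ → E) :
    ∫ ζ : Circ, f (circEmb ζ) = Real.circleAverage f 0 1 := by
  have hmap (x : ℝ) : circEmb x = circleMap 0 1 (2 * π * x) := by
    simp [circEmb, circleMap, AddCircle.toCircle_apply_mk]
  rw [← AddCircle.intervalIntegral_preimage 1 0, Real.circleAverage]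
  simp only [hmap]
  rw [intervalIntegral.integral_comp_mul_left (fun y ↦ f (circleMap 0 1 y)) (by positivity)]
  simp

end Circle

section PoissonKernel

variable {z : ℂ}

lemma poissonKernel_zero_circEmb (z : ℂ) (ζ : Circ) :
    poissonKernel 0 z (circEmb ζ) = (1 - ‖z‖ ^ 2) / ‖circEmb ζ - z‖ ^ 2 := by
  simp [poissonKernel_def, norm_circEmb]

lemma norm_circEmb_sub_pos (hz : ‖z‖ < 1) (ζ : Circ) : 0 < ‖circEmb ζ - z‖ := by
  linarith [norm_sub_norm_le (circEmb ζ) z, norm_circEmb ζ]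

lemma poissonKernel_zero_circEmb_nonneg (hz : ‖z‖ < 1) (ζ : Circ) :
    0 ≤ poissonKernel 0 z (circEmb ζ) := by
  rw [poissonKernel_zero_circEmb]
  exact div_nonneg (by nlinarith [norm_nonneg z]) (by positivity)

lemma continuous_poissonKernel_zero_circEmb (hz : ‖z‖ < 1) :
    Continuous fun ζ ↦ poissonKernel 0 z (circEmb ζ) := by
  simp_rw [poissonKernel_zero_circEmb]
  exact continuous_const.div ((continuous_circEmb.sub continuous_const).norm.pow 2)
    fun ζ ↦ (pow_pos (norm_circEmb_sub_pos hz ζ) 2).ne'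

lemma poissonKernel_zero_circEmb_le (hz : ‖z‖ < 1) (ζ : Circ) :
    poissonKernel 0 z (circEmb ζ) ≤ 2 / (1 - ‖z‖) := by
  have hle := re_herglotzRieszKernel_le (c := 0) (R := 1) (z := circEmb ζ) (w := z)
    (by simp [norm_circEmb]) (by simpa using hz)
  rw [poissonKernel_eq_re_herglotzRieszKernel]
  refine hle.trans ?_
  rw [sub_zero]
  gcongr
  linarith

lemma integral_poissonKernel_zero_circEmb (hz : ‖z‖ < 1) :
    ∫ ζ : Circ, poissonKernel 0 z (circEmb ζ) = 1 := by
  rw [integral_comp_circEmb]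
  have hmean := InnerProductSpace.HarmonicContOnCl.circleAverage_poissonKernel_smul
    (f := (1 : ℂ → ℝ)) InnerProductSpace.harmonicContOnCl_const (mem_ball_zero_iff.2 hz)
  simpa using hmean

lemma poissonKernel_zero_circEmb_le_of_dist_le {r : ℝ} (hr : 0 ≤ r) (hr_lt : r < 1)
    {θ ζ ξ : Circ} (hdist : dist ζ θ ≤ dist ξ θ) :
    poissonKernel 0 (r * circEmb θ) (circEmb ξ) ≤ poissonKernel 0 (r * circEmb θ) (circEmb ζ) := by
  have hnorm : ‖r * circEmb θ‖ = r := by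
    rw [norm_mul, norm_circEmb, mul_one, Complex.norm_of_nonneg hr]
  have hhalf : dist ξ θ ≤ 1 / 2 := by
    simpa [dist_eq_norm] using AddCircle.norm_le_half_period (x := ξ - θ) 1 one_ne_zero
  have hcos : Real.cos (2 * π * dist ξ θ) ≤ Real.cos (2 * π * dist ζ θ) :=
    Real.cos_le_cos_of_nonneg_of_le_pi (by positivity) (by nlinarith [Real.pi_pos]) (by gcongr)
  have hcloser : ‖circEmb ζ - r * circEmb θ‖ ^ 2 ≤ ‖circEmb ξ - r * circEmb θ‖ ^ 2 := by
    rw [norm_circEmb_sub_mul_circEmb_sq, norm_circEmb_sub_mul_circEmb_sq]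
    gcongr
  rw [poissonKernel_zero_circEmb, poissonKernel_zero_circEmb, hnorm]
  refine div_le_div_of_nonneg_left (by nlinarith) ?_ hcloser
  exact pow_pos (norm_circEmb_sub_pos (hnorm.trans_lt hr_lt) ζ) 2

end PoissonKernel

section Gauge

variable {h : ℝ → ℝ} {d x : ℝ}

lemma nonneg_of_monotoneOn_of_antitoneOn_div (hmono : MonotoneOn h (Ioc 0 1))
    (hanti : AntitoneOn (fun x ↦ h x / x) (Ioc 0 1)) (hx : x ∈ Ioc 0 1) : 0 ≤ h x := by
  have hx_pos : 0 < x := hx.1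
  have hhalf : x / 2 ∈ Ioc 0 1 := ⟨by linarith, by linarith [hx.2]⟩
  have hle : h (x / 2) ≤ h x := hmono hhalf hx (by linarith)
  have hdiv : h x / x ≤ h (x / 2) / (x / 2) := hanti hhalf hx (by linarith)
  have hdouble : h x ≤ 2 * h (x / 2) := by
    rw [div_le_div_iff₀ hx_pos hhalf.1] at hdiv
    nlinarith
  linarith

lemma le_div_mul_add_of_monotoneOn_of_antitoneOn_div (hmono : MonotoneOn h (Ioc 0 1))
    (hanti : AntitoneOn (fun x ↦ h x / x) (Ioc 0 1)) (hd : d ∈ Ioc 0 1) (hx : x ∈ Ioc 0 1) :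
    h x ≤ h d / d * x + h d := by
  have hhd := nonneg_of_monotoneOn_of_antitoneOn_div hmono hanti hd
  rcases le_total x d with hxd | hdx
  · have hslope : 0 ≤ h d / d * x := mul_nonneg (div_nonneg hhd hd.1.le) hx.1.le
    linarith [hmono hx hd hxd]
  · have hratio : h x / x ≤ h d / d := hanti hd hx hdx
    linarith [(div_le_iff₀ hx.1).1 hratio]

/-- The measure `(h d / d) m + h d δ_θ`, with `m` normalized Lebesgue measure, whose mass
on an arc `I` containing `θ` dominates `h |I|` when `h` is a gauge and `d ∈ (0, 1]`.
The coefficients are truncated at zero. -/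
def gaugeMajorant (h : ℝ → ℝ) (d : ℝ) (θ : Circ) : Measure Circ :=
  (h d / d).toNNReal • volume + (h d).toNNReal • Measure.dirac θ

instance isFiniteMeasure_gaugeMajorant (h : ℝ → ℝ) (d : ℝ) (θ : Circ) :
    IsFiniteMeasure (gaugeMajorant h d θ) := by
  unfold gaugeMajorant
  infer_instance

lemma gaugeMajorant_real_of_mem (hd : 0 ≤ d) (hhd : 0 ≤ h d) {θ : Circ} {I : Set Circ}
    (hθ : θ ∈ I) : (gaugeMajorant h d θ).real I = h d / d * volume.real I + h d := by
  rw [gaugeMajorant, measureReal_add_apply, measureReal_nnreal_smul_apply,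
    measureReal_nnreal_smul_apply, Real.coe_toNNReal _ (div_nonneg hhd hd),
    Real.coe_toNNReal _ hhd, measureReal_def (Measure.dirac θ), Measure.dirac_apply_of_mem hθ,
    ENNReal.toReal_one, mul_one]

lemma integral_gaugeMajorant (hd : 0 ≤ d) (hhd : 0 ≤ h d) (θ : Circ) {f : Circ → ℝ}
    (hf : Continuous f) :
    ∫ ζ, f ζ ∂gaugeMajorant h d θ = h d / d * (∫ ζ, f ζ) + h d * f θ := by
  have hf_int (m : Measure Circ) [IsFiniteMeasure m] : Integrable f m :=
    hf.integrable_of_hasCompactSupport (.of_compactSpace f)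
  rw [gaugeMajorant, integral_add_measure (hf_int _) (hf_int _), integral_smul_nnreal_measure,
    integral_smul_nnreal_measure, integral_dirac, NNReal.smul_def, NNReal.smul_def,
    Real.coe_toNNReal _ (div_nonneg hhd hd), Real.coe_toNNReal _ hhd, smul_eq_mul, smul_eq_mul]

end Gauge

section ArcBound

variable {h : ℝ → ℝ} {μ ν : Measure Circ} [IsFiniteMeasure μ] [IsFiniteMeasure ν]

lemma measure_coe_image_Ioc_le_add_gaugeMajorant (hmono : MonotoneOn h (Ioc 0 1))
    (hanti : AntitoneOn (fun x ↦ h x / x) (Ioc 0 1))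
    (harc : ∀ I : Set Circ, IsArc I → μ.real I - ν.real I ≤ h (volume.real I))
    {a b d θ : ℝ} (hd : d ∈ Ioc 0 1) (hθ : θ ∈ Ioc a b) :
    μ ((fun x : ℝ ↦ (x : Circ)) '' Ioc a b) ≤
      (ν + gaugeMajorant h d θ) ((fun x : ℝ ↦ (x : Circ)) '' Ioc a b) := by
  set I : Set Circ := (fun x : ℝ ↦ (x : Circ)) '' Ioc a b
  have hmass : (gaugeMajorant h d θ).real I = h d / d * volume.real I + h d :=
    gaugeMajorant_real_of_mem hd.1.le (nonneg_of_monotoneOn_of_antitoneOn_div hmono hanti hd)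
      (mem_image_of_mem _ hθ)
  have hgauge : h (volume.real I) ≤ h d / d * volume.real I + h d :=
    le_div_mul_add_of_monotoneOn_of_antitoneOn_div hmono hanti hd
      (volume_real_coe_image_Ioc_mem (hθ.1.trans_le hθ.2))
  rw [← ENNReal.toReal_le_toReal (measure_ne_top _ _) (measure_ne_top _ _), ← measureReal_def,
    ← measureReal_def, measureReal_add_apply, hmass]
  linarith [harc I ⟨a, b, rfl⟩]

lemma measure_ball_le_add_gaugeMajorant (hmono : MonotoneOn h (Ioc 0 1))
    (hanti : AntitoneOn (fun x ↦ h x / x) (Ioc 0 1))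
    (harc : ∀ I : Set Circ, IsArc I → μ.real I - ν.real I ≤ h (volume.real I))
    {d ε : ℝ} (hd : d ∈ Ioc 0 1) (hε : 0 < ε) (θ : ℝ) :
    μ (ball (θ : Circ) ε) ≤ (ν + gaugeMajorant h d θ) (ball (θ : Circ) ε) := by
  rw [← coe_image_Ioo_eq_ball]
  exact measure_image_Ioo_le_of_forall_Ioc (x := θ) (by linarith) fun b' hb' ↦
    measure_coe_image_Ioc_le_add_gaugeMajorant hmono hanti harc hd ⟨by linarith, hb'.1.le⟩

theorem poisson_estimate_general (hmono : MonotoneOn h (Ioc 0 1))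
    (hanti : AntitoneOn (fun x ↦ h x / x) (Ioc 0 1))
    (harc : ∀ I : Set Circ, IsArc I → μ.real I - ν.real I ≤ h (volume.real I))
    {z : ℂ} (hz : ‖z‖ < 1) :
    (∫ ζ : Circ, poissonKernel 0 z (circEmb ζ) ∂μ) -
        (∫ ζ : Circ, poissonKernel 0 z (circEmb ζ) ∂ν) ≤
      3 * h (1 - ‖z‖) / (1 - ‖z‖) := by
  obtain ⟨θ, hθ⟩ := exists_eq_norm_mul_circEmb z
  set d := 1 - ‖z‖
  set P : Circ → ℝ := fun ζ ↦ poissonKernel 0 z (circEmb ζ)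
  have hd : d ∈ Ioc 0 1 := ⟨sub_pos.2 hz, sub_le_self 1 (norm_nonneg z)⟩
  have hhd : 0 ≤ h d := nonneg_of_monotoneOn_of_antitoneOn_div hmono hanti hd
  have hP_cont : Continuous P := continuous_poissonKernel_zero_circEmb hz
  have hP_int (m : Measure Circ) [IsFiniteMeasure m] : Integrable P m :=
    hP_cont.integrable_of_hasCompactSupport (.of_compactSpace P)
  have hP_radial (ζ ξ : Circ) (hdist : dist ζ θ ≤ dist ξ θ) : P ξ ≤ P ζ := by
    have hle := poissonKernel_zero_circEmb_le_of_dist_le (norm_nonneg z) hz hdist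
    rwa [← hθ] at hle
  have hmajorant : ∫ ζ, P ζ ∂μ ≤ ∫ ζ, P ζ ∂(ν + gaugeMajorant h d θ) :=
    integral_le_integral_of_measure_ball_le (poissonKernel_zero_circEmb_nonneg hz) hP_cont hP_radial
      fun ε hε ↦ measure_ball_le_add_gaugeMajorant hmono hanti harc hd hε θ
  rw [integral_add_measure (hP_int _) (hP_int _), integral_gaugeMajorant hd.1.le hhd θ hP_cont,
    integral_poissonKernel_zero_circEmb hz, mul_one] at hmajorant
  calc (∫ ζ, P ζ ∂μ) - ∫ ζ, P ζ ∂ν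
      ≤ h d / d + h d * P θ := by linarith
    _ ≤ h d / d + h d * (2 / d) := by gcongr; exact poissonKernel_zero_circEmb_le hz θ
    _ = 3 * h d / d := by ring

end ArcBound

/-- Poisson integral estimate: if `σ = μ - ν` is a real Borel measure on `𝕋` with
`σ(𝕋) = 0` and `σ(I) ≤ h(|I|)` for every arc `I`, then there is `C = C(h) > 0` with
`∫_𝕋 (1-|z|²)/|ζ-z|² dσ(ζ) ≤ C·h(1-|z|)/(1-|z|)` for all `z ∈ 𝔻`. -/
theorem poisson_estimate (h : ℝ → ℝ) (hh : GaugeFun h) :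
    ∃ C : ℝ, 0 < C ∧
      ∀ (μ ν : Measure Circ), IsFiniteMeasure μ → IsFiniteMeasure ν →
        μ Set.univ = ν Set.univ →
        (∀ I : Set Circ, IsArc I → (μ I).toReal - (ν I).toReal ≤ h (volume I).toReal) →
        ∀ z : ℂ, ‖z‖ < 1 →
          (∫ ζ : Circ, (1 - ‖z‖ ^ 2) / ‖circEmb ζ - z‖ ^ 2 ∂μ) -
            (∫ ζ : Circ, (1 - ‖z‖ ^ 2) / ‖circEmb ζ - z‖ ^ 2 ∂ν) ≤
            C * h (1 - ‖z‖) / (1 - ‖z‖) := by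
  refine ⟨3, by norm_num, fun μ ν _ _ _ harc z hz ↦ ?_⟩
  simpa only [poissonKernel_zero_circEmb] using
    poisson_estimate_general hh.2.1 hh.2.2.2.2.1 harc hz
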